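/- Let z(n,k) denote the number of ordered labeled trees on the vertex set {0,1,...,n} that consist of a decreasing tree with k edges together with n-k additional increasing leaves attached to vertices of that decreasing tree. Then z(n,n) = (2n-1)!! for all n ≥ 0, where (2n-1)!! = (2n-1)(2n-3)···3·1 and (-1)!! = 1. -/

import Mathlib

/-!
In a decreasing tree the least label is always carried by a leaf, so deleting that leaf inverts the
insertion of a leaf with a new least label. The forest below the root, when it has `m` vertices,
admits exactly `2 * m + 1` insertion positions: one as the last root of the forest, and for each
vertex one immediately to its left and one as its last child. Multiplying over `m < n` gives
`1 * 3 * ⋯ * (2 * n - 1)`.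
-/

/-- An ordered labeled tree: a root label together with an ordered list of subtrees. -/
inductive OTree : Type
  | node : ℕ → List OTree → OTree

namespace OTree

/-- The label of the root. -/
def root : OTree → ℕ
  | node a _ => a

/-- The list of subtrees of the root (in order). -/
def children : OTree → List OTree
  | node _ ts => ts

mutual
  /-- The list of all vertex labels of the tree. -/
  def labels : OTree → List ℕ
    | node a ts => a :: labelsList ts
  def labelsList : List OTree → List ℕ
    | [] => []
    | t :: ts => labels t ++ labelsList ts
end

/-- The number of vertices of the tree. -/
def size (T : OTree) : ℕ := T.labels.length

mutual
  /-- The maximal decreasing subtree from the root: keep exactly the children whose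
  label is smaller than their parent's label, recursively. -/
  def md : OTree → OTree
    | node a ts => node a (mdList a ts)
  def mdList : ℕ → List OTree → List OTree
    | _, [] => []
    | a, t :: ts => (if t.root < a then [md t] else []) ++ mdList a ts
end

mutual
  /-- `IsZ T` states that every vertex of `T` not in the maximal decreasing subtree is a
  leaf (attached by an increasing edge to a vertex of the maximal decreasing subtree). -/
  def IsZ : OTree → Prop
    | node a ts => IsZList a ts
  def IsZList : ℕ → List OTree → Prop
    | _, [] => True
    | a, t :: ts => (if t.root < a then IsZ t else t.children = []) ∧ IsZList a ts
end

/-- `T.OnRange n` : the vertices of `T` are labeled by distinct labels and the set of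
labels is exactly `{0, 1, …, n}`. -/
def OnRange (T : OTree) (n : ℕ) : Prop :=
  T.labels.Nodup ∧ ∀ i, i ∈ T.labels ↔ i ≤ n

end OTree

/-- `T` is a member of `Z_{n,k}`: an ordered labeled tree on `{0,…,n}` consisting of a
decreasing tree with `k` edges (its maximal decreasing subtree, with `k+1` vertices)
together with `n-k` additional increasing leaves attached to it. -/
def MemZ (T : OTree) (n k : ℕ) : Prop :=
  T.OnRange n ∧ T.md.size = k + 1 ∧ T.IsZ

theorem encard_biUnion_eq_mul {ι α : Type*} {t : Set ι} {s : ι → Set α} {c : ℕ∞}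
    (ht : t.Finite) (hs : t.PairwiseDisjoint s) (hc : ∀ i ∈ t, (s i).encard = c) :
    (⋃ i ∈ t, s i).encard = t.encard * c := by
  rw [ht.encard_biUnion hs, finsum_mem_congr rfl hc, finsum_mem_eq_finite_toFinset_sum _ ht,
    Finset.sum_const, nsmul_eq_mul, ht.encard_eq_coe_toFinset_card]

namespace OTree

variable {a n v : ℕ} {s : Finset ℕ} {L L' : List OTree}

@[elab_as_elim]
theorem forest_induction {motive : List OTree → Prop} (nil : motive [])
    (cons : ∀ b cs ts, motive cs → motive ts → motive (node b cs :: ts)) : ∀ L, motive L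
  | [] => nil
  | node b cs :: ts =>
    cons b cs ts (forest_induction nil cons cs) (forest_induction nil cons ts)

theorem labelsList_node_cons (b : ℕ) (cs ts : List OTree) :
    labelsList (node b cs :: ts) = b :: (labelsList cs ++ labelsList ts) := by
  simp only [labelsList, labels, List.cons_append]

theorem eq_nil_of_labelsList_eq_nil (h : labelsList L = []) : L = [] := by
  match L with
  | [] => rfl
  | node b cs :: ts => simp [labelsList_node_cons] at h

/-- The forest `L` is decreasing and stays so when hung below a vertex labeled `a`. -/
def IsDecreasingBelow (a : ℕ) : List OTree → Prop
  | [] => True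
  | node b cs :: ts => b < a ∧ IsDecreasingBelow b cs ∧ IsDecreasingBelow a ts

theorem isDecreasingBelow_nil : IsDecreasingBelow a [] := by
  simp only [IsDecreasingBelow]

theorem isDecreasingBelow_cons {b : ℕ} {cs ts : List OTree} :
    IsDecreasingBelow a (node b cs :: ts) ↔
      b < a ∧ IsDecreasingBelow b cs ∧ IsDecreasingBelow a ts := by
  rw [IsDecreasingBelow]

theorem IsDecreasingBelow.lt (h : IsDecreasingBelow a L) : ∀ i ∈ labelsList L, i < a := by
  induction L using forest_induction generalizing a with
  | nil => simp [labelsList]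
  | cons b cs ts ihcs ihts =>
    obtain ⟨hb, hcs, hts⟩ := isDecreasingBelow_cons.1 h
    simp only [labelsList_node_cons, List.mem_cons, List.mem_append]
    rintro i (rfl | hi | hi)
    · exact hb
    · exact (ihcs hcs i hi).trans hb
    · exact ihts hts i hi

theorem IsDecreasingBelow.isZList (h : IsDecreasingBelow a L) : IsZList a L := by
  induction L using forest_induction generalizing a with
  | nil => simp [IsZList]
  | cons b cs ts ihcs ihts =>
    obtain ⟨hb, hcs, hts⟩ := isDecreasingBelow_cons.1 h
    simp [IsZList, IsZ, root, hb, ihcs hcs, ihts hts]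

theorem mdList_node_cons (a b : ℕ) (cs ts : List OTree) :
    mdList a (node b cs :: ts) =
      if b < a then node b (mdList b cs) :: mdList a ts else mdList a ts := by
  by_cases hb : b < a <;> simp [mdList, md, root, hb]

theorem length_labelsList_mdList_le (a : ℕ) (L : List OTree) :
    (labelsList (mdList a L)).length ≤ (labelsList L).length := by
  induction L using forest_induction generalizing a with
  | nil => simp [mdList]
  | cons b cs ts ihcs ihts =>
    have hcs := ihcs b
    have hts := ihts a
    rw [mdList_node_cons]
    split_ifs <;>
      simp only [labelsList_node_cons, List.length_cons, List.length_append] <;>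
      omega

theorem length_labelsList_mdList_eq_iff :
    (labelsList (mdList a L)).length = (labelsList L).length ↔ IsDecreasingBelow a L := by
  induction L using forest_induction generalizing a with
  | nil => simp [mdList, isDecreasingBelow_nil]
  | cons b cs ts ihcs ihts =>
    have hcs := length_labelsList_mdList_le b cs
    have hts := length_labelsList_mdList_le a ts
    rw [isDecreasingBelow_cons, ← ihcs, ← ihts, mdList_node_cons]
    split_ifs <;>
      simp only [labelsList_node_cons, List.length_cons, List.length_append] <;>
      omega

theorem size_md_node_eq_size_iff :
    (node a L).md.size = (node a L).size ↔ IsDecreasingBelow a L := by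
  simp only [size, md, labels, List.length_cons, add_left_inj, length_labelsList_mdList_eq_iff]

theorem onRange_iff_coe_labels {T : OTree} :
    T.OnRange n ↔ (T.labels : Multiset ℕ) = Multiset.range (n + 1) := by
  constructor
  · rintro ⟨hnodup, hmem⟩
    refine (Multiset.Nodup.ext (Multiset.coe_nodup.2 hnodup) (Multiset.nodup_range _)).2 fun i => ?_
    rw [Multiset.mem_coe, hmem, Multiset.mem_range, Nat.lt_succ_iff]
  · intro h
    refine ⟨Multiset.coe_nodup.1 (h ▸ Multiset.nodup_range _), fun i => ?_⟩
    rw [← Multiset.mem_coe, h, Multiset.mem_range, Nat.lt_succ_iff]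

theorem OnRange.size_eq {T : OTree} (h : T.OnRange n) : T.size = n + 1 := by
  simpa [size] using congrArg Multiset.card (onRange_iff_coe_labels.1 h)

/-- The decreasing forests that can be hung below `a`, with vertices labeled bijectively by `s`.
The equality of multisets says both that the labels are distinct and that they exhaust `s`. -/
def decreasingForests (a : ℕ) (s : Finset ℕ) : Set (List OTree) :=
  {L | IsDecreasingBelow a L ∧ (labelsList L : Multiset ℕ) = s.val}

theorem mem_labelsList_iff_mem (hL : L ∈ decreasingForests a s) : v ∈ labelsList L ↔ v ∈ s := by
  rw [← Multiset.mem_coe, hL.2, Finset.mem_val]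

theorem length_labelsList_of_mem_decreasingForests (hL : L ∈ decreasingForests a s) :
    (labelsList L).length = s.card := by
  rw [← Multiset.coe_card, hL.2, Finset.card_val]

theorem decreasingForests_empty (a : ℕ) : decreasingForests a ∅ = {[]} := by
  ext L
  refine ⟨fun hL => eq_nil_of_labelsList_eq_nil ?_, ?_⟩
  · simpa using hL.2
  · rintro rfl
    exact ⟨isDecreasingBelow_nil, by simp [labelsList]⟩

theorem memZ_self_iff {T : OTree} :
    MemZ T n n ↔ T ∈ node n '' decreasingForests n (Finset.range n) := by
  constructor
  · obtain ⟨a, L⟩ := T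
    rintro ⟨hrange, hsize, -⟩
    have hlabels := onRange_iff_coe_labels.1 hrange
    have hdec : IsDecreasingBelow a L :=
      size_md_node_eq_size_iff.1 (hsize.trans hrange.size_eq.symm)
    have hroot : a = n := by
      refine le_antisymm ((hrange.2 a).1 (by simp [labels])) ?_
      rcases List.mem_cons.1 ((hrange.2 n).2 le_rfl) with h | h
      exacts [h.le, (hdec.lt n h).le]
    subst hroot
    rw [labels, ← Multiset.cons_coe, Multiset.range_succ, Multiset.cons_inj_right] at hlabels
    exact ⟨L, ⟨hdec, hlabels⟩, rfl⟩
  · rintro ⟨L, ⟨hdec, hlabels⟩, rfl⟩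
    have hrange : (node n L).OnRange n := onRange_iff_coe_labels.2 <| by
      rw [labels, ← Multiset.cons_coe, hlabels, Multiset.range_succ, Finset.range_val]
    exact ⟨hrange, (size_md_node_eq_size_iff.2 hdec).trans hrange.size_eq, hdec.isZList⟩

/-- The forests obtained from a forest by attaching one new leaf labeled `v`, either as a new
component or as a new child of an existing vertex, at any place in the order. -/
def leafInsertions (v : ℕ) : List OTree → Set (List OTree)
  | [] => {[node v []]}
  | node b cs :: ts =>
    insert (node v [] :: node b cs :: ts)
      ((fun cs' => node b cs' :: ts) '' leafInsertions v cs ∪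
        (fun ts' => node b cs :: ts') '' leafInsertions v ts)

theorem mem_leafInsertions_nil : L' ∈ leafInsertions v [] ↔ L' = [node v []] := by
  rw [leafInsertions, Set.mem_singleton_iff]

theorem mem_leafInsertions_cons {b : ℕ} {cs ts : List OTree} :
    L' ∈ leafInsertions v (node b cs :: ts) ↔ L' = node v [] :: node b cs :: ts ∨
      (∃ cs' ∈ leafInsertions v cs, node b cs' :: ts = L') ∨
      ∃ ts' ∈ leafInsertions v ts, node b cs :: ts' = L' := by
  rw [leafInsertions]
  rfl

theorem node_nil_cons_mem_leafInsertions (v : ℕ) (L : List OTree) :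
    node v [] :: L ∈ leafInsertions v L := by
  match L with
  | [] => exact mem_leafInsertions_nil.2 rfl
  | node _ _ :: _ => exact mem_leafInsertions_cons.2 (.inl rfl)

theorem coe_labelsList_of_mem_leafInsertions (h : L' ∈ leafInsertions v L) :
    (labelsList L' : Multiset ℕ) = v ::ₘ labelsList L := by
  induction L using forest_induction generalizing L' with
  | nil => rw [mem_leafInsertions_nil.1 h, labelsList_node_cons]; rfl
  | cons b cs ts ihcs ihts =>
    rcases mem_leafInsertions_cons.1 h with rfl | ⟨cs', hcs', rfl⟩ | ⟨ts', hts', rfl⟩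
    · rfl
    · simp only [labelsList_node_cons, ← Multiset.cons_coe, ← Multiset.coe_add, ihcs hcs',
        Multiset.cons_add, Multiset.cons_swap b v]
    · simp only [labelsList_node_cons, ← Multiset.cons_coe, ← Multiset.coe_add, ihts hts',
        Multiset.add_cons, Multiset.cons_swap b v]

theorem mem_labelsList_of_mem_leafInsertions (h : L' ∈ leafInsertions v L) :
    v ∈ labelsList L' := by
  rw [← Multiset.mem_coe, coe_labelsList_of_mem_leafInsertions h]
  exact Multiset.mem_cons_self _ _

theorem encard_leafInsertions (hv : v ∉ labelsList L) :
    (leafInsertions v L).encard = (2 * (labelsList L).length + 1 : ℕ) := by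
  induction L using forest_induction with
  | nil => simp [leafInsertions, labelsList]
  | cons b cs ts ihcs ihts =>
    simp only [labelsList_node_cons, List.mem_cons, List.mem_append, not_or] at hv
    obtain ⟨hb, hcs, hts⟩ := hv
    have hfirst : node v [] :: node b cs :: ts ∉
        (fun cs' => node b cs' :: ts) '' leafInsertions v cs ∪
          (fun ts' => node b cs :: ts') '' leafInsertions v ts := by
      rintro (⟨cs', -, h⟩ | ⟨ts', -, h⟩)
      · simp at h
      · simp [Ne.symm hb] at h
    have hdisj : Disjoint ((fun cs' => node b cs' :: ts) '' leafInsertions v cs)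
        ((fun ts' => node b cs :: ts') '' leafInsertions v ts) := by
      refine Set.disjoint_left.2 ?_
      rintro _ ⟨cs', hcs', rfl⟩ ⟨ts', -, h⟩
      have hcs_eq : cs = cs' := (node.inj (List.cons.inj h).1).2
      exact hcs (hcs_eq ▸ mem_labelsList_of_mem_leafInsertions hcs')
    rw [leafInsertions, Set.encard_insert_of_notMem hfirst, Set.encard_union_eq hdisj,
      Function.Injective.encard_image (fun _ _ h => by simpa using h),
      Function.Injective.encard_image (fun _ _ h => by simpa using h), ihcs hcs, ihts hts,
      labelsList_node_cons, List.length_cons, List.length_append]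
    push_cast
    ring

/-- The forest obtained by removing every vertex labeled `v` together with its descendants. -/
def prune (v : ℕ) : List OTree → List OTree
  | [] => []
  | node b cs :: ts => if b = v then prune v ts else node b (prune v cs) :: prune v ts

theorem prune_of_notMem (hv : v ∉ labelsList L) : prune v L = L := by
  induction L using forest_induction with
  | nil => rw [prune]
  | cons b cs ts ihcs ihts =>
    simp only [labelsList_node_cons, List.mem_cons, List.mem_append, not_or] at hv
    rw [prune, if_neg (Ne.symm hv.1), ihcs hv.2.1, ihts hv.2.2]

theorem prune_of_mem_leafInsertions (h : L' ∈ leafInsertions v L) : prune v L' = prune v L := by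
  induction L using forest_induction generalizing L' with
  | nil => simp [mem_leafInsertions_nil.1 h, prune]
  | cons b cs ts ihcs ihts =>
    rcases mem_leafInsertions_cons.1 h with rfl | ⟨cs', hcs', rfl⟩ | ⟨ts', hts', rfl⟩
    · simp [prune]
    · simp only [prune, ihcs hcs']
    · simp only [prune, ihts hts']

theorem pairwiseDisjoint_leafInsertions (v : ℕ) :
    {L | v ∉ labelsList L}.PairwiseDisjoint (leafInsertions v) := by
  intro L₁ hL₁ L₂ hL₂ hne
  refine Set.disjoint_left.2 fun L' h₁ h₂ => hne ?_
  calc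
    L₁ = prune v L₁ := (prune_of_notMem hL₁).symm
    _ = prune v L' := (prune_of_mem_leafInsertions h₁).symm
    _ = prune v L₂ := prune_of_mem_leafInsertions h₂
    _ = L₂ := prune_of_notMem hL₂

theorem isDecreasingBelow_iff_of_mem_leafInsertions (hva : v < a)
    (hv : ∀ i ∈ labelsList L, v < i) (h : L' ∈ leafInsertions v L) :
    IsDecreasingBelow a L' ↔ IsDecreasingBelow a L := by
  induction L using forest_induction generalizing a L' with
  | nil => simp [mem_leafInsertions_nil.1 h, isDecreasingBelow_cons, isDecreasingBelow_nil, hva]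
  | cons b cs ts ihcs ihts =>
    simp only [labelsList_node_cons, List.forall_mem_cons, List.forall_mem_append] at hv
    obtain ⟨hvb, hvcs, hvts⟩ := hv
    rcases mem_leafInsertions_cons.1 h with rfl | ⟨cs', hcs', rfl⟩ | ⟨ts', hts', rfl⟩
    · simp [isDecreasingBelow_cons, isDecreasingBelow_nil, hva]
    · simp only [isDecreasingBelow_cons, ihcs hvb hvcs hcs']
    · simp only [isDecreasingBelow_cons, ihts hva hvts hts']

theorem IsDecreasingBelow.exists_mem_leafInsertions (h : IsDecreasingBelow a L')
    (hv : v ∈ labelsList L') (hmin : ∀ i ∈ labelsList L', v ≤ i) :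
    ∃ L, L' ∈ leafInsertions v L := by
  induction L' using forest_induction generalizing a with
  | nil => simp [labelsList] at hv
  | cons b cs ts ihcs ihts =>
    obtain ⟨-, hcs, hts⟩ := isDecreasingBelow_cons.1 h
    simp only [labelsList_node_cons, List.forall_mem_cons, List.forall_mem_append] at hmin
    obtain ⟨-, hmincs, hmints⟩ := hmin
    simp only [labelsList_node_cons, List.mem_cons, List.mem_append] at hv
    rcases hv with rfl | hv | hv
    · have hleaf : cs = [] := eq_nil_of_labelsList_eq_nil <|
        List.eq_nil_iff_forall_not_mem.2 fun i hi => (hcs.lt i hi).not_ge (hmincs i hi)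
      subst hleaf
      exact ⟨ts, node_nil_cons_mem_leafInsertions v ts⟩
    · obtain ⟨cs₀, hcs₀⟩ := ihcs hcs hv hmincs
      exact ⟨node b cs₀ :: ts, mem_leafInsertions_cons.2 (.inr (.inl ⟨cs, hcs₀, rfl⟩))⟩
    · obtain ⟨ts₀, hts₀⟩ := ihts hts hv hmints
      exact ⟨node b cs :: ts₀, mem_leafInsertions_cons.2 (.inr (.inr ⟨ts, hts₀, rfl⟩))⟩

theorem mem_decreasingForests_insert_iff (hva : v < a) (hvs : ∀ i ∈ s, v < i)
    (h : L' ∈ leafInsertions v L) :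
    L' ∈ decreasingForests a (insert v s) ↔ L ∈ decreasingForests a s := by
  have hv : v ∉ s := fun hv => (hvs v hv).false
  have hlabels : (labelsList L' : Multiset ℕ) = (insert v s).val ↔
      (labelsList L : Multiset ℕ) = s.val := by
    rw [coe_labelsList_of_mem_leafInsertions h, Finset.insert_val_of_notMem hv,
      Multiset.cons_inj_right]
  have hdec (hL : (labelsList L : Multiset ℕ) = s.val) :
      IsDecreasingBelow a L' ↔ IsDecreasingBelow a L :=
    isDecreasingBelow_iff_of_mem_leafInsertions hva
      (fun i hi => hvs i (by rwa [← Multiset.mem_coe, hL] at hi)) h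
  exact (and_congr_right' hlabels).trans (and_congr_left hdec)

theorem decreasingForests_insert (hva : v < a) (hvs : ∀ i ∈ s, v < i) :
    decreasingForests a (insert v s) = ⋃ L ∈ decreasingForests a s, leafInsertions v L := by
  ext L'
  simp only [Set.mem_iUnion, exists_prop]
  constructor
  · intro hL'
    obtain ⟨L, hL⟩ : ∃ L, L' ∈ leafInsertions v L := by
      refine hL'.1.exists_mem_leafInsertions
        ((mem_labelsList_iff_mem hL').2 (Finset.mem_insert_self v s)) fun i hi => ?_
      rcases Finset.mem_insert.1 ((mem_labelsList_iff_mem hL').1 hi) with rfl | hi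
      exacts [le_rfl, (hvs i hi).le]
    exact ⟨L, (mem_decreasingForests_insert_iff hva hvs hL).1 hL', hL⟩
  · rintro ⟨L, hL, hL'⟩
    exact (mem_decreasingForests_insert_iff hva hvs hL').2 hL

theorem encard_decreasingForests (hs : ∀ i ∈ s, i < a) :
    (decreasingForests a s).encard = (Nat.doubleFactorial (2 * s.card - 1) : ℕ∞) := by
  induction s using Finset.induction_on_min with
  | empty => simp [decreasingForests_empty]
  | insert v s hvs ih =>
    obtain ⟨hva, hsa⟩ := (Finset.forall_mem_insert v s (· < a)).1 hs
    have hv : v ∉ s := fun hv => (hvs v hv).false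
    have hnotMem : decreasingForests a s ⊆ {L | v ∉ labelsList L} :=
      fun L hL => (mem_labelsList_iff_mem hL).not.2 hv
    have hfinite : (decreasingForests a s).Finite :=
      Set.finite_of_encard_eq_coe (ih hsa)
    calc
      (decreasingForests a (insert v s)).encard
        = (⋃ L ∈ decreasingForests a s, leafInsertions v L).encard := by
          rw [decreasingForests_insert hva hvs]
      _ = (decreasingForests a s).encard * (2 * s.card + 1 : ℕ) :=
          encard_biUnion_eq_mul hfinite ((pairwiseDisjoint_leafInsertions v).subset hnotMem)
            fun L hL => by rw [encard_leafInsertions (hnotMem hL),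
              length_labelsList_of_mem_decreasingForests hL]
      _ = (Nat.doubleFactorial (2 * (insert v s).card - 1) : ℕ∞) := by
          rw [ih hsa, Finset.card_insert_of_notMem hv, ← Nat.cast_mul, mul_comm,
            ← Nat.doubleFactorial_add_one]
          rfl

end OTree

/-- `z(n,n) = (2n-1)!!` for all `n ≥ 0`, i.e. the number of decreasing ordered labeled
trees on `{0,…,n}` is the double factorial `(2n-1)!!` (with `(-1)!! = 1`). -/
theorem z_diagonal (n : ℕ) :
    Nat.card {T : OTree // MemZ T n n} = Nat.doubleFactorial (2 * n - 1) := by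
  have hforests := OTree.encard_decreasingForests (a := n) fun _ => Finset.mem_range.1
  calc
    Nat.card {T : OTree // MemZ T n n}
      = (OTree.node n '' OTree.decreasingForests n (Finset.range n)).ncard :=
        Nat.card_congr (Equiv.subtypeEquivRight fun _ => OTree.memZ_self_iff)
    _ = (OTree.decreasingForests n (Finset.range n)).ncard :=
        Set.ncard_image_of_injective _ fun _ _ h => (OTree.node.inj h).2
    _ = Nat.doubleFactorial (2 * n - 1) := by
        rw [Set.ncard, hforests, ENat.toNat_natCast, Finset.card_range]
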